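/- Let n ≥ 1, let E be a real normed vector space, and let s : ℝ × E → Matrix (Fin n) (Fin n) ℝ be twice continuously differentiable with s(ε,x) invertible for all (ε,x); interpret ε as a variation parameter. Define the family of matrix-valued one-forms σ_ε(x)(w) := (d_x s(ε,x) w) * s(ε,x)⁻¹ and the infinitesimal variation η(x) := (∂_ε s(ε,x)|_{ε=0}) * s(0,x)⁻¹. Then for every x ∈ E and w ∈ E: ∂_ε(σ_ε(x)(w))|_{ε=0} = (dη(x))(w) − ⁅σ_0(x)(w), η(x)⁆. That is, vertical variations of a section induce exactly the constrained variations δσ̄ = dη − [σ̄, η] of its reduced first jet extension. -/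

import Mathlib

open MeasureTheory

attribute [local instance] Matrix.normedAddCommGroup Matrix.normedSpace

/-!
The right logarithmic derivative `ω = (dg)g⁻¹`, the pullback along `g` of the right-invariant
Maurer–Cartan form, satisfies `D_u ω(v) - D_v ω(u) = [ω(u), ω(v)]`, because the second derivatives
of `g` cancel by symmetry. For `s : ℝ × E → A` and `ω = (ds)s⁻¹`, naturality of the pullback
identifies `σ̄` with the component of `ω` along `E` and `η` with the one along `ℝ`, so the formula
for `δσ̄` is the structure equation on the pair `(1, 0)`, `(0, w)`.
-/

open scoped Ring Topology

section RightLogDeriv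

variable {𝕜 E F G A : Type*} [NontriviallyNormedField 𝕜]
  [NormedAddCommGroup E] [NormedSpace 𝕜 E] [NormedAddCommGroup F] [NormedSpace 𝕜 F]
  [NormedAddCommGroup G] [NormedSpace 𝕜 G]
  [NormedRing A] [NormedAlgebra 𝕜 A]

theorem fderiv_clm_apply_const {ω : E → F →L[𝕜] G} {x : E} (hω : DifferentiableAt 𝕜 ω x)
    (u : E) (v : F) : fderiv 𝕜 (fun y => ω y v) x u = fderiv 𝕜 ω x u v := by
  simp [fderiv_clm_apply hω (differentiableAt_const v)]

variable (𝕜) in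
/-- The right logarithmic derivative `(dg)g⁻¹` of an algebra-valued map `g`, a one-form with
values in the algebra; this is the reduced first jet extension when `g` is a section of a trivial
principal bundle. The inverse is `Ring.inverse`, which is `0` where `g` is not invertible. -/
noncomputable def rightLogDeriv (g : E → A) (x : E) : E →L[𝕜] A :=
  (ContinuousLinearMap.mul 𝕜 A).flip (g x)⁻¹ʳ ∘L fderiv 𝕜 g x

theorem rightLogDeriv_apply (g : E → A) (x v : E) :
    rightLogDeriv 𝕜 g x v = fderiv 𝕜 g x v * (g x)⁻¹ʳ :=
  rfl

theorem rightLogDeriv_apply_one (g : 𝕜 → A) (t : 𝕜) :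
    rightLogDeriv 𝕜 g t 1 = deriv g t * (g t)⁻¹ʳ := by
  rw [rightLogDeriv_apply, fderiv_apply_one_eq_deriv]

theorem rightLogDeriv_comp {g : F → A} {f : E → F} {x : E}
    (hg : DifferentiableAt 𝕜 g (f x)) (hf : DifferentiableAt 𝕜 f x) :
    rightLogDeriv 𝕜 (fun y => g (f y)) x = rightLogDeriv 𝕜 g (f x) ∘L fderiv 𝕜 f x := by
  ext v
  simp only [ContinuousLinearMap.comp_apply, rightLogDeriv_apply, fderiv_fun_comp x hg hf]

theorem rightLogDeriv_prodMk_left_apply {g : E × F → A} {x : E} {y : F}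
    (hg : DifferentiableAt 𝕜 g (x, y)) (v : E) :
    rightLogDeriv 𝕜 (fun x' => g (x', y)) x v = rightLogDeriv 𝕜 g (x, y) (v, 0) := by
  have hf := hasFDerivAt_prodMk_left (𝕜 := 𝕜) x y
  simp [rightLogDeriv_comp (f := (·, y)) hg hf.differentiableAt, hf.fderiv]

theorem rightLogDeriv_prodMk_right_apply {g : E × F → A} {x : E} {y : F}
    (hg : DifferentiableAt 𝕜 g (x, y)) (w : F) :
    rightLogDeriv 𝕜 (fun y' => g (x, y')) y w = rightLogDeriv 𝕜 g (x, y) (0, w) := by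
  have hf := hasFDerivAt_prodMk_right (𝕜 := 𝕜) x y
  simp [rightLogDeriv_comp (f := Prod.mk x) hg hf.differentiableAt, hf.fderiv]

theorem fderiv_rightLogDeriv_prodMk_left_apply {g : E × F → A} {x : E} {y : F}
    (hg : ∀ᶠ p in 𝓝 (x, y), DifferentiableAt 𝕜 g p)
    (hω : DifferentiableAt 𝕜 (rightLogDeriv 𝕜 g) (x, y)) (u : E) (w : F) :
    fderiv 𝕜 (fun y' => rightLogDeriv 𝕜 (fun x' => g (x', y')) x u) y w =
      fderiv 𝕜 (rightLogDeriv 𝕜 g) (x, y) (0, w) (u, 0) := by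
  have hslice : (fun y' => rightLogDeriv 𝕜 (fun x' => g (x', y')) x u) =ᶠ[𝓝 y]
      fun y' => rightLogDeriv 𝕜 g (x, y') (u, 0) := by
    filter_upwards [(Continuous.prodMk_right x).continuousAt.eventually hg] with y' hy'
    exact rightLogDeriv_prodMk_left_apply hy' u
  have hf := hasFDerivAt_prodMk_right (𝕜 := 𝕜) x y
  rw [hslice.fderiv_eq, fderiv_clm_apply_const (hω.fun_comp' y hf.differentiableAt),
    fderiv_fun_comp y hω hf.differentiableAt, hf.fderiv]
  rfl

theorem fderiv_rightLogDeriv_prodMk_right_apply {g : E × F → A} {x : E} {y : F}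
    (hg : ∀ᶠ p in 𝓝 (x, y), DifferentiableAt 𝕜 g p)
    (hω : DifferentiableAt 𝕜 (rightLogDeriv 𝕜 g) (x, y)) (u : E) (w : F) :
    fderiv 𝕜 (fun x' => rightLogDeriv 𝕜 (fun y' => g (x', y')) y w) x u =
      fderiv 𝕜 (rightLogDeriv 𝕜 g) (x, y) (u, 0) (0, w) := by
  have hslice : (fun x' => rightLogDeriv 𝕜 (fun y' => g (x', y')) y w) =ᶠ[𝓝 x]
      fun x' => rightLogDeriv 𝕜 g (x', y) (0, w) := by
    filter_upwards [(Continuous.prodMk_left y).continuousAt.eventually hg] with x' hx'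
    exact rightLogDeriv_prodMk_right_apply hx' w
  have hf := hasFDerivAt_prodMk_left (𝕜 := 𝕜) x y
  rw [hslice.fderiv_eq,
    fderiv_clm_apply_const (DifferentiableAt.fun_comp' (f := (·, y)) x hω hf.differentiableAt),
    fderiv_fun_comp (f := (·, y)) x hω hf.differentiableAt, hf.fderiv]
  rfl

variable [HasSummableGeomSeries A]

theorem fderiv_ringInverse_comp_apply {g : E → A} {x : E}
    (hg : DifferentiableAt 𝕜 g x) (hx : IsUnit (g x)) (u : E) :
    fderiv 𝕜 (fun y => (g y)⁻¹ʳ) x u = -((g x)⁻¹ʳ * fderiv 𝕜 g x u * (g x)⁻¹ʳ) := by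
  rw [fderiv_fun_comp x (differentiableAt_inverse hx) hg]
  obtain ⟨a, ha⟩ := hx
  simp [← ha, fderiv_inverse]

theorem differentiableAt_rightLogDeriv {g : E → A} {x : E}
    (hg : DifferentiableAt 𝕜 g x) (hg' : DifferentiableAt 𝕜 (fderiv 𝕜 g) x)
    (hx : IsUnit (g x)) : DifferentiableAt 𝕜 (rightLogDeriv 𝕜 g) x := by
  unfold rightLogDeriv
  fun_prop (disch := assumption)

theorem fderiv_rightLogDeriv_apply {g : E → A} {x : E}
    (hg : DifferentiableAt 𝕜 g x) (hg' : DifferentiableAt 𝕜 (fderiv 𝕜 g) x)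
    (hx : IsUnit (g x)) (u v : E) :
    fderiv 𝕜 (rightLogDeriv 𝕜 g) x u v =
      fderiv 𝕜 (fderiv 𝕜 g) x u v * (g x)⁻¹ʳ -
        rightLogDeriv 𝕜 g x v * rightLogDeriv 𝕜 g x u := by
  calc
    fderiv 𝕜 (rightLogDeriv 𝕜 g) x u v
      = fderiv 𝕜 (fun y => fderiv 𝕜 g y v * (g y)⁻¹ʳ) x u :=
        (fderiv_clm_apply_const (differentiableAt_rightLogDeriv hg hg' hx) u v).symm
    _ = fderiv 𝕜 g x v * fderiv 𝕜 (fun y => (g y)⁻¹ʳ) x u +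
          fderiv 𝕜 (fun y => fderiv 𝕜 g y v) x u * (g x)⁻¹ʳ := by
        rw [fderiv_fun_mul' (hg'.clm_apply (differentiableAt_const v)) (hg.inverse hx)]
        rfl
    _ = fderiv 𝕜 (fderiv 𝕜 g) x u v * (g x)⁻¹ʳ -
          rightLogDeriv 𝕜 g x v * rightLogDeriv 𝕜 g x u := by
        rw [fderiv_ringInverse_comp_apply hg hx, fderiv_clm_apply_const hg',
          rightLogDeriv_apply, rightLogDeriv_apply]
        noncomm_ring

theorem fderiv_rightLogDeriv_sub_swap {g : E → A} {x : E} {n : WithTop ℕ∞}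
    (hg : ContDiffAt 𝕜 n g x) (hn : minSmoothness 𝕜 2 ≤ n) (hx : IsUnit (g x)) (u v : E) :
    fderiv 𝕜 (rightLogDeriv 𝕜 g) x u v - fderiv 𝕜 (rightLogDeriv 𝕜 g) x v u =
      ⁅rightLogDeriv 𝕜 g x u, rightLogDeriv 𝕜 g x v⁆ := by
  have hg₂ : ContDiffAt 𝕜 2 g x := hg.of_le (le_minSmoothness.trans hn)
  have hd : DifferentiableAt 𝕜 g x := hg₂.differentiableAt two_ne_zero
  have hd' : DifferentiableAt 𝕜 (fderiv 𝕜 g) x :=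
    (hg₂.fderiv_right (m := 1) le_rfl).differentiableAt one_ne_zero
  rw [fderiv_rightLogDeriv_apply hd hd' hx, fderiv_rightLogDeriv_apply hd hd' hx,
    hg.isSymmSndFDerivAt hn u v, Ring.lie_def]
  abel

theorem fderiv_rightLogDeriv_slice_sub {g : E × F → A} {x : E} {y : F} {n : WithTop ℕ∞}
    (hg : ContDiffAt 𝕜 n g (x, y)) (hn : minSmoothness 𝕜 2 ≤ n) (hxy : IsUnit (g (x, y)))
    (u : E) (w : F) :
    fderiv 𝕜 (fun x' => rightLogDeriv 𝕜 (fun y' => g (x', y')) y w) x u -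
        fderiv 𝕜 (fun y' => rightLogDeriv 𝕜 (fun x' => g (x', y')) x u) y w =
      ⁅rightLogDeriv 𝕜 (fun x' => g (x', y)) x u, rightLogDeriv 𝕜 (fun y' => g (x, y')) y w⁆ := by
  have hg₂ : ContDiffAt 𝕜 2 g (x, y) := hg.of_le (le_minSmoothness.trans hn)
  have hg_near : ∀ᶠ p in 𝓝 (x, y), DifferentiableAt 𝕜 g p :=
    (hg₂.eventually (by simp)).mono fun p hp => hp.differentiableAt two_ne_zero
  have hω : DifferentiableAt 𝕜 (rightLogDeriv 𝕜 g) (x, y) :=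
    differentiableAt_rightLogDeriv (hg₂.differentiableAt two_ne_zero)
      ((hg₂.fderiv_right (m := 1) le_rfl).differentiableAt one_ne_zero) hxy
  rw [fderiv_rightLogDeriv_prodMk_right_apply hg_near hω,
    fderiv_rightLogDeriv_prodMk_left_apply hg_near hω,
    fderiv_rightLogDeriv_sub_swap hg hn hxy,
    rightLogDeriv_prodMk_left_apply hg_near.self_of_nhds,
    rightLogDeriv_prodMk_right_apply hg_near.self_of_nhds]

theorem variations_of_reduced_jet_extension_general
    {s : 𝕜 × E → A} {t : 𝕜} {x : E} {n : WithTop ℕ∞}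
    (hs : ContDiffAt 𝕜 n s (t, x)) (hn : minSmoothness 𝕜 2 ≤ n) (hinv : IsUnit (s (t, x)))
    {σ : 𝕜 → E → E → A}
    (hσ : ∀ ε y w, σ ε y w = fderiv 𝕜 (fun z => s (ε, z)) y w * (s (ε, y))⁻¹ʳ)
    {η : E → A} (hη : ∀ y, η y = deriv (fun ε => s (ε, y)) t * (s (t, y))⁻¹ʳ) (w : E) :
    deriv (fun ε => σ ε x w) t = fderiv 𝕜 η x w - ⁅σ t x w, η x⁆ := by
  have hη' : η = fun y => rightLogDeriv 𝕜 (fun ε => s (ε, y)) t 1 := by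
    ext y
    rw [hη, rightLogDeriv_apply_one]
  have hσ' : ∀ ε, σ ε x w = rightLogDeriv 𝕜 (fun y => s (ε, y)) x w := fun ε => hσ ε x w
  have structure_eq := fderiv_rightLogDeriv_slice_sub hs hn hinv 1 w
  simp only [hη', hσ', ← fderiv_apply_one_eq_deriv]
  rw [sub_eq_iff_eq_add.mp structure_eq, Ring.lie_def, Ring.lie_def]
  abel

end RightLogDeriv

section LinftyOp

attribute [local instance] Matrix.linftyOpNormedAddCommGroup Matrix.linftyOpNormedSpace
  Matrix.linftyOpNormedRing

theorem contDiffAt_matrixOf_linftyOp_iff {𝕜 E F m n : Type*} [NontriviallyNormedField 𝕜]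
    [NormedAddCommGroup E] [NormedSpace 𝕜 E] [NormedAddCommGroup F] [NormedSpace 𝕜 F]
    [Fintype m] [Fintype n] {k : WithTop ℕ∞} {f : E → m → n → F} {x : E} :
    ContDiffAt 𝕜 k (fun y => Matrix.of (f y)) x ↔ ContDiffAt 𝕜 k f x :=
  let ofEquiv : (m → n → F) ≃L[𝕜] Matrix m n F :=
    { Matrix.ofLinearEquiv 𝕜 with
      continuous_toFun := continuous_id
      continuous_invFun := continuous_id }
  ofEquiv.comp_contDiffAt_iff

theorem hasSummableGeomSeries_matrix_linftyOp {R n : Type*} [NormedRing R] [CompleteSpace R]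
    [Fintype n] [DecidableEq n] : HasSummableGeomSeries (Matrix n n R) :=
  @instHasSummableGeomSeriesOfCompleteSpace _ _ (inferInstanceAs (CompleteSpace (n → n → R)))

end LinftyOp

/-- Vertical variations of a section induce exactly the constrained variations
`δσ̄ = dη − [σ̄, η]` of its reduced first jet extension `σ̄ = (ds̄)s̄⁻¹`,
with `η = (δs̄)s̄⁻¹`. -/
theorem variations_of_reduced_jet_extension
    {n : ℕ} (hn : 1 ≤ n)
    {E : Type*} [NormedAddCommGroup E] [NormedSpace ℝ E]
    (s : ℝ × E → Matrix (Fin n) (Fin n) ℝ)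
    (hs : ContDiff ℝ 2 s)
    (hinv : ∀ p : ℝ × E, IsUnit (s p))
    (σ : ℝ → E → E → Matrix (Fin n) (Fin n) ℝ)
    (hσ : ∀ ε x w, σ ε x w = (fderiv ℝ (fun y => s (ε, y)) x w) * (s (ε, x))⁻¹)
    (η : E → Matrix (Fin n) (Fin n) ℝ)
    (hη : ∀ x, η x = deriv (fun e => s (e, x)) 0 * (s (0, x))⁻¹) :
    ∀ (x w : E),
      deriv (fun e => σ e x w) 0 = fderiv ℝ η x w - ⁅σ 0 x w, η x⁆ := by
  intro x w
  simp only [Matrix.nonsing_inv_eq_ringInverse] at hσ hη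
  -- The entrywise sup norm is not submultiplicative; the `L¹`-`L∞` operator norm is, and since both
  -- carry the product topology definitionally, `deriv` and `fderiv` do not see the change of norm.
  let _ : NormedRing (Matrix (Fin n) (Fin n) ℝ) := Matrix.linftyOpNormedRing
  let _ : NormedAlgebra ℝ (Matrix (Fin n) (Fin n) ℝ) := Matrix.linftyOpNormedAlgebra
  have : HasSummableGeomSeries (Matrix (Fin n) (Fin n) ℝ) := hasSummableGeomSeries_matrix_linftyOp
  exact variations_of_reduced_jet_extension_general
    (contDiffAt_matrixOf_linftyOp_iff.2 hs.contDiffAt) (by simp) (hinv _) hσ hη w
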